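/- Intermediate optimality bound (Eq. 18): Suppose π* is a policy maximizing J, i.e. J(π*) ≥ J(π) for every policy π. Then for every integer m ≥ 0, J(π*) ≤ ∑_{s : p(s)>0} p(s) ∑_{a∈A} π*(a|s) ( F(s,a) − (1/β) log( πᵐ(a|s) / priorᵐ(a) ) ). -/

import Mathlib

open Finset

/-- A probability distribution on a finite type: nonnegative and sums to one. -/
def IsDist {X : Type*} [Fintype X] (d : X → ℝ) : Prop :=
  (∀ x, 0 ≤ d x) ∧ ∑ x, d x = 1

/-- Kullback–Leibler divergence: sum over points where `μ` is positive. -/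
noncomputable def KL {X : Type*} [Fintype X] (μ ν : X → ℝ) : ℝ :=
  ∑ x, if 0 < μ x then μ x * Real.log (μ x / ν x) else 0

/-- Marginal action distribution of policy `π` under state distribution `p`. -/
noncomputable def margPol {S A : Type*} [Fintype S] [Fintype A]
    (p : S → ℝ) (π : S → A → ℝ) (a : A) : ℝ :=
  ∑ s, p s * π s a

/-- Evaluation operator `B_{q,π} V (s)` (with `F s a = R s a + γ 𝔼[V]` precomputed). -/
noncomputable def Beval {S A : Type*} [Fintype S] [Fintype A]
    (F : S → A → ℝ) (β : ℝ) (q : A → ℝ) (π : S → A → ℝ) (s : S) : ℝ :=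
  ∑ a, if 0 < π s a then π s a * (F s a - (1 / β) * Real.log (π s a / q a)) else 0

/-- Mutual-information-regularized objective `J(π)`. -/
noncomputable def Jobj {S A : Type*} [Fintype S] [Fintype A]
    (p : S → ℝ) (F : S → A → ℝ) (β : ℝ) (π : S → A → ℝ) : ℝ :=
  ∑ s, if 0 < p s then
    p s * ∑ a, (if 0 < π s a then
      π s a * (F s a - (1 / β) * Real.log (π s a / margPol p π a)) else 0)
  else 0

/-- Blahut–Arimoto policy iterates. -/
noncomputable def BApol {S A : Type*} [Fintype S] [Fintype A]
    (p : S → ℝ) (F : S → A → ℝ) (β : ℝ) (π0 : S → A → ℝ) : ℕ → S → A → ℝ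
  | 0 => π0
  | m + 1 => fun s a =>
      ((∑ s', p s' * BApol p F β π0 m s' a) * Real.exp (β * F s a)) /
        ∑ a', (∑ s', p s' * BApol p F β π0 m s' a') * Real.exp (β * F s a')

/-- Blahut–Arimoto prior iterates: the marginal of the `m`-th policy under `p`. -/
noncomputable def BAprior {S A : Type*} [Fintype S] [Fintype A]
    (p : S → ℝ) (F : S → A → ℝ) (β : ℝ) (π0 : S → A → ℝ) (m : ℕ) (a : A) : ℝ :=
  ∑ s, p s * BApol p F β π0 m s a

theorem aux_marg_pos {S A : Type*} [Fintype S] [Fintype A]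
    (p : S → ℝ) (hp : IsDist p) (π : S → A → ℝ) (h : ∀ s a, 0 < π s a) (a : A) :
    0 < ∑ s, p s * π s a := by
  have h0 : ∀ s ∈ (Finset.univ : Finset S), 0 ≤ p s * π s a :=
    fun s _ => mul_nonneg (hp.1 s) (h s a).le
  have hex : ∃ s, 0 < p s := by
    by_contra hc
    push Not at hc
    have h1 : ∑ s, p s ≤ 0 := Finset.sum_nonpos (fun s _ => hc s)
    linarith [hp.2]
  obtain ⟨s, hs⟩ := hex
  exact Finset.sum_pos' h0 ⟨s, Finset.mem_univ s, mul_pos hs (h s a)⟩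

theorem aux_pol_pos {S A : Type*} [Fintype S] [Fintype A] [Nonempty A]
    (p : S → ℝ) (hp : IsDist p) (F : S → A → ℝ) (β : ℝ) (π0 : S → A → ℝ)
    (h : ∀ s a, 0 < π0 s a) (m : ℕ) : ∀ s a, 0 < BApol p F β π0 m s a := by
  induction m with
  | zero => exact h
  | succ m ih =>
    intro s a
    simp only [BApol]
    have hq := aux_marg_pos p hp _ ih
    exact div_pos (mul_pos (hq a) (Real.exp_pos _))
      (Finset.sum_pos (fun a' _ => mul_pos (hq a') (Real.exp_pos _)) Finset.univ_nonempty)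

theorem aux_term (x M w q : ℝ) (hx : 0 < x) (hM : 0 < M) (hw : 0 < w) (hq : 0 < q) :
    x * (Real.log (w / q) - Real.log (x / M)) ≤ M * w / q - x := by
  rw [← Real.log_div (by positivity) (by positivity)]
  have h := Real.log_le_sub_one_of_pos (show 0 < w / q / (x / M) by positivity)
  have h2 := mul_le_mul_of_nonneg_left h hx.le
  have h3 : x * (w / q / (x / M) - 1) = M * w / q - x := by
    field_simp
  linarith

/-- Intermediate optimality bound (Eq. 18). -/
theorem intermediate_optimality_bound
    {S A : Type*} [Fintype S] [Fintype A] [Nonempty S] [Nonempty A]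
    (p : S → ℝ) (hp : IsDist p)
    (R : S → A → ℝ) (P : S → A → S → ℝ) (hP : ∀ s a, IsDist (P s a))
    (V : S → ℝ) (β : ℝ) (hβ : 0 < β) (γ : ℝ) (hγ : 0 < γ ∧ γ < 1)
    (F : S → A → ℝ) (hF : ∀ s a, F s a = R s a + γ * ∑ s', P s a s' * V s')
    (π0 : S → A → ℝ) (hπ0 : ∀ s, IsDist (π0 s)) (hπ0pos : ∀ s a, 0 < π0 s a)
    (πstar : S → A → ℝ) (hπstar : ∀ s, IsDist (πstar s))
    (hopt : ∀ π : S → A → ℝ, (∀ s, IsDist (π s)) → Jobj p F β π ≤ Jobj p F β πstar)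
    (m : ℕ) :
    Jobj p F β πstar
      ≤ ∑ s, if 0 < p s then
          p s * ∑ a, πstar s a *
            (F s a - (1 / β) *
              Real.log (BApol p F β π0 m s a / BAprior p F β π0 m a)) else 0 := by
  have hw := aux_pol_pos p hp F β π0 hπ0pos m
  have hq : ∀ a, 0 < BAprior p F β π0 m a := aux_marg_pos p hp _ hw
  generalize hwd : BApol p F β π0 m = w at *
  have hqd : ∀ a, BAprior p F β π0 m a = ∑ s, p s * w s a := by
    intro a; rw [← hwd]; rfl
  generalize BAprior p F β π0 m = q at *
  have hM0 : ∀ a, 0 ≤ margPol p πstar a := fun a =>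
    Finset.sum_nonneg (fun s _ => mul_nonneg (hp.1 s) ((hπstar s).1 a))
  have hMs : ∑ s, ∑ a, p s * πstar s a = 1 := by
    simp_rw [← Finset.mul_sum, (hπstar _).2, mul_one]
    exact hp.2
  have hTs : ∑ s, ∑ a, p s * (margPol p πstar a * w s a / q a) = 1 := by
    rw [Finset.sum_comm, ← hMs, Finset.sum_comm (f := fun s a => p s * πstar s a)]
    refine Finset.sum_congr rfl fun a _ => ?_
    have : ∀ s, p s * (margPol p πstar a * w s a / q a)
        = (margPol p πstar a / q a) * (p s * w s a) := fun s => by ring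
    simp_rw [this]
    rw [← Finset.mul_sum, ← hqd a, div_mul_cancel₀ _ (hq a).ne']
    rfl
  have key : Jobj p F β πstar
      ≤ ∑ s, ((if 0 < p s then
          p s * ∑ a, πstar s a * (F s a - (1 / β) * Real.log (w s a / q a)) else 0)
          + (1 / β) * ∑ a, (p s * (margPol p πstar a * w s a / q a) - p s * πstar s a)) := by
    unfold Jobj
    refine Finset.sum_le_sum fun s _ => ?_
    split_ifs with hs
    · rw [Finset.mul_sum, Finset.mul_sum, Finset.mul_sum, ← Finset.sum_add_distrib]
      refine Finset.sum_le_sum fun a _ => ?_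
      split_ifs with ha
      · have hM : 0 < margPol p πstar a :=
          Finset.sum_pos' (fun s _ => mul_nonneg (hp.1 s) ((hπstar s).1 a))
            ⟨s, Finset.mem_univ s, mul_pos hs ha⟩
        have h := aux_term _ _ _ _ ha hM (hw s a) (hq a)
        have h2 := mul_le_mul_of_nonneg_left h (show 0 ≤ (1 / β) * p s by positivity)
        linarith
      · have h0 : πstar s a = 0 := le_antisymm (not_lt.mp ha) ((hπstar s).1 a)
        have h1 := hM0 a
        have h2 := hw s a
        have h3 := hq a
        simp only [h0, mul_zero, zero_mul, sub_zero, zero_add]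
        positivity
    · have h0 : p s = 0 := le_antisymm (not_lt.mp hs) (hp.1 s)
      simp [h0]
  rw [Finset.sum_add_distrib, ← Finset.mul_sum] at key
  simp_rw [Finset.sum_sub_distrib] at key
  rw [hTs, hMs] at key
  simpa using key
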